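/- arXiv:2102.04397 — 6 statements merged into one kernel-verified Lean document; each statement's English description precedes it below -/
import Mathlib

section
/- Fix (x,y') ∈ Γ and y ∈ Y. Suppose v := ∇_x c(x,y) − ∇_x c(x,y') ≠ 0 and there exists a sequence (x_n,y_n) ∈ Γ with (x_n,y_n) → (x,y'), x_n ≠ x, such that liminf_n cos α_n > 0, where α_n is the angle between v and x − x_n. Then I(x,y) > 0. -/
open MeasureTheory Filter Topology Set
open scoped ENNReal

noncomputable section

namespace EOT

variable {X Y : Type*}

/-- A coupling of `μ` and `ν`: a probability measure on the product with the given marginals. -/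
def IsCoupling [MeasurableSpace X] [MeasurableSpace Y]
    (μ : Measure X) (ν : Measure Y) (π : Measure (X × Y)) : Prop :=
  IsProbabilityMeasure π ∧ π.map Prod.fst = μ ∧ π.map Prod.snd = ν

/-- `(c,ε)`-cyclical invariance: `π` is equivalent to `P = μ ⊗ ν`, with a positive version of the
density satisfying the cyclical identity for all `k` points. -/
def IsCyclInvariant [MeasurableSpace X] [MeasurableSpace Y]
    (c : X → Y → ℝ) (ε : ℝ) (μ : Measure X) (ν : Measure Y)
    (π : Measure (X × Y)) : Prop :=
  IsCoupling μ ν π ∧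
  ∃ D : X × Y → ℝ, Measurable D ∧ (∀ z, 0 < D z) ∧
    π = (μ.prod ν).withDensity (fun z => ENNReal.ofReal (D z)) ∧
    ∀ (k : ℕ) (x : Fin (k + 1) → X) (y : Fin (k + 1) → Y),
      (∏ i, D (x i, y i)) =
        Real.exp (-(1 / ε) * ((∑ i, c (x i) (y i)) - ∑ i, c (x i) (y (i + 1)))) *
        ∏ i, D (x i, y (i + 1))

/-- Topological support of a measure. -/
def mSupport {Z : Type*} [TopologicalSpace Z] [MeasurableSpace Z] (π : Measure Z) : Set Z :=
  {z | ∀ U : Set Z, IsOpen U → z ∈ U → 0 < π U}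

/-- Weak convergence `π ε → π₀` as `ε → 0⁺`, tested against bounded continuous functions. -/
def TendstoWeakly {Z : Type*} [TopologicalSpace Z] [MeasurableSpace Z]
    (π : ℝ → Measure Z) (π₀ : Measure Z) : Prop :=
  ∀ f : BoundedContinuousFunction Z ℝ,
    Tendsto (fun ε => ∫ z, f z ∂(π ε)) (𝓝[>] (0 : ℝ)) (𝓝 (∫ z, f z ∂π₀))

/-- `c`-cyclical monotonicity of a set `Γ ⊆ X × Y`. -/
def CCyclMonotone (c : X → Y → ℝ) (Γ : Set (X × Y)) : Prop :=
  ∀ (k : ℕ) (p : Fin (k + 1) → X × Y), (∀ i, p i ∈ Γ) →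
    (∑ i, c (p i).1 (p i).2) ≤ ∑ i, c (p i).1 (p (i + 1)).2

/-- The rate function `I(x,y)`: supremum over `k ≥ 2`, points `(x_i,y_i)_{i=2}^k ⊆ Γ`
(the first point being `z`) and permutations `σ` of the cost difference. -/
def rateI (c : X → Y → ℝ) (Γ : Set (X × Y)) (z : X × Y) : EReal :=
  ⨆ (k : ℕ) (p : Fin (k + 2) → X × Y) (_ : p 0 = z) (_ : ∀ i, i ≠ 0 → p i ∈ Γ)
    (σ : Equiv.Perm (Fin (k + 2))),
    (((∑ i, c (p i).1 (p i).2) - ∑ i, c (p i).1 (p (σ i)).2 : ℝ) : EReal)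

/-- The variant of the rate function using only the cyclic shift. -/
def rateICyc (c : X → Y → ℝ) (Γ : Set (X × Y)) (z : X × Y) : EReal :=
  ⨆ (k : ℕ) (p : Fin (k + 2) → X × Y) (_ : p 0 = z) (_ : ∀ i, i ≠ 0 → p i ∈ Γ),
    (((∑ i, c (p i).1 (p i).2) - ∑ i, c (p i).1 (p (i + 1)).2 : ℝ) : EReal)

open scoped Classical in
/-- Relative entropy (Kullback–Leibler divergence) `H(π|R)`, valued in `EReal`. -/
def relEntropy {Z : Type*} [MeasurableSpace Z] (π R : Measure Z) : EReal :=
  if π ≪ R ∧ Integrable (fun z => Real.log (π.rnDeriv R z).toReal) π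
  then ((∫ z, Real.log (π.rnDeriv R z).toReal ∂π : ℝ) : EReal)
  else ⊤

/-- Transport cost `∫ c dπ` (as a lower integral). -/
def transportCost [MeasurableSpace X] [MeasurableSpace Y]
    (c : X → Y → ℝ) (π : Measure (X × Y)) : ℝ≥0∞ :=
  ∫⁻ z, ENNReal.ofReal (c z.1 z.2) ∂π

/-- Entropic optimal transport objective `∫ c dπ + ε H(π|μ⊗ν)`. -/
def eotObj [MeasurableSpace X] [MeasurableSpace Y]
    (c : X → Y → ℝ) (ε : ℝ) (μ : Measure X) (ν : Measure Y) (π : Measure (X × Y)) : EReal :=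
  (transportCost c π : EReal) + (ε : EReal) * relEntropy π (μ.prod ν)

/-- The `c`-conjugate `ψ^c(y) = inf_x [ψ(x) + c(x,y)]`. -/
def cConj (c : X → Y → ℝ) (ψ : X → EReal) (y : Y) : EReal :=
  ⨅ x, ψ x + (c x y : EReal)

/-- A proper `c`-convex function `ψ(x) = sup_y [ζ(y) − c(x,y)]`. -/
def IsCConvex (c : X → Y → ℝ) (ψ : X → EReal) : Prop :=
  (∀ x, ψ x ≠ ⊥) ∧ (∃ x, ψ x ≠ ⊤) ∧
  ∃ ζ : Y → EReal, ∀ x, ψ x = ⨆ y, ζ y - (c x y : EReal)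

/-- The `c`-subdifferential `∂_c ψ = {(x,y) : ψ^c(y) − ψ(x) = c(x,y)}`. -/
def cSubdiff (c : X → Y → ℝ) (ψ : X → EReal) : Set (X × Y) :=
  {p | cConj c ψ p.2 - ψ p.1 = (c p.1 p.2 : EReal)}

/-- A Kantorovich potential for `Γ`: a `c`-convex `ψ` with `Γ ⊆ ∂_c ψ`. -/
def IsKantorovichPotential (c : X → Y → ℝ) (Γ : Set (X × Y)) (ψ : X → EReal) : Prop :=
  IsCConvex c ψ ∧ Γ ⊆ cSubdiff c ψ

/-- Uniqueness of Kantorovich potentials on a set `Λ ⊆ X`. -/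
def UniquenessOfPotentials (c : X → Y → ℝ) (Γ : Set (X × Y)) (Λ : Set X) : Prop :=
  ∀ ψ₁ ψ₂ : X → EReal, IsKantorovichPotential c Γ ψ₁ → IsKantorovichPotential c Γ ψ₂ →
    ∀ x ∈ Λ, ∀ x' ∈ Λ, ψ₁ x - ψ₂ x = ψ₁ x' - ψ₂ x'

/-- The Rockafellar antiderivative `ψ_{(x₀,y₀)}` of `Γ`. -/
def rockafellar (c : X → Y → ℝ) (Γ : Set (X × Y)) (z₀ : X × Y) (x : X) : EReal :=
  ⨆ (k : ℕ) (p : Fin (k + 1) → X × Y) (_ : ∀ i, p i ∈ Γ),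
    ((c z₀.1 z₀.2 - c (p 0).1 z₀.2 +
        ∑ i : Fin (k + 1),
          (c (p i).1 (p i).2 -
            c (if h : (i : ℕ) + 1 < k + 1 then (p ⟨(i : ℕ) + 1, h⟩).1 else x) (p i).2) : ℝ) : EReal)

section Statement

variable {d : ℕ} {Y : Type*} [MetricSpace Y]

local notation "E" => EuclideanSpace ℝ (Fin d)

/-!
Exchanging the second coordinates of `(x, y)` and a nearby `(x₁, y₁) ∈ Γ` lowers the total cost by
`f x - f x₁`, where `f ξ = c ξ y - c ξ y₁`, so this number is a lower bound for `I(x, y)`. By the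
mean value theorem it equals `⟪∇f ξ, x - x₁⟫` for some `ξ` between `x₁` and `x`. As
`(x₁, y₁) → (x, y')`, the gradient `∇f ξ` tends to `v`, while `x - x₁` stays in a fixed cone of
half-angle less than `π / 2` around `v`, so the inner product is eventually positive.
-/

section Inner

variable {F : Type*} [NormedAddCommGroup F] [InnerProductSpace ℝ F]

theorem inner_pos_of_norm_sub_lt_norm_mul_cos_angle {u v w : F}
    (h : ‖w - v‖ < ‖v‖ * Real.cos (InnerProductGeometry.angle v u)) : 0 < inner ℝ w u := by
  have hu : u ≠ 0 := by
    rintro rfl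
    rw [InnerProductGeometry.angle_zero_right, Real.cos_pi_div_two, mul_zero] at h
    exact h.not_ge (norm_nonneg _)
  calc
    0 < (‖v‖ * Real.cos (InnerProductGeometry.angle v u) - ‖w - v‖) * ‖u‖ :=
      mul_pos (sub_pos.mpr h) (norm_pos_iff.mpr hu)
    _ = inner ℝ v u - ‖w - v‖ * ‖u‖ := by
      rw [← InnerProductGeometry.cos_angle_mul_norm_mul_norm v u]
      ring
    _ ≤ inner ℝ v u + inner ℝ (w - v) u := by
      linarith [neg_le_of_abs_le (abs_real_inner_le_norm (w - v) u)]
    _ = inner ℝ w u := by rw [← inner_add_left, add_sub_cancel]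

variable [CompleteSpace F]

theorem hasGradientAt_sub {f g : F → ℝ} {f' g' x : F} (hf : HasGradientAt f f' x)
    (hg : HasGradientAt g g' x) : HasGradientAt (fun z => f z - g z) (f' - g') x := by
  rw [hasGradientAt_iff_hasFDerivAt, map_sub]
  exact hf.hasFDerivAt.fun_sub hg.hasFDerivAt

theorem exists_mem_segment_sub_eq_inner {f : F → ℝ} {f' : F → F} {a b : F}
    (hf : ∀ z ∈ segment ℝ a b, HasGradientAt f (f' z) z) :
    ∃ z ∈ segment ℝ a b, f b - f a = inner ℝ (f' z) (b - a) :=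
  domain_mvt (fun z hz => (hf z hz).hasFDerivAt.hasFDerivWithinAt) (convex_segment a b)
    (left_mem_segment ℝ a b) (right_mem_segment ℝ a b)

theorem eventually_lt_of_lt_cos_angle {ι : Type*} {l : Filter ι} {f : ι → F → ℝ}
    {f' : ι → F → F} {x v : F} {a b : ι → F} {δ : ℝ}
    (hf : ∀ᶠ p in l ×ˢ 𝓝 x, HasGradientAt (f p.1) (f' p.1 p.2) p.2)
    (hf' : Tendsto (fun p : ι × F => f' p.1 p.2) (l ×ˢ 𝓝 x) (𝓝 v))
    (ha : Tendsto a l (𝓝 x)) (hb : Tendsto b l (𝓝 x)) (hδ : 0 < δ) :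
    ∀ᶠ i in l, δ < Real.cos (InnerProductGeometry.angle v (b i - a i)) →
      f i (a i) < f i (b i) := by
  obtain rfl | hv := eq_or_ne v 0
  · refine Eventually.of_forall fun i hcos => absurd hcos ?_
    rw [InnerProductGeometry.angle_zero_left, Real.cos_pi_div_two]
    exact hδ.not_gt
  have hclose : ∀ᶠ p in l ×ˢ 𝓝 x, ‖f' p.1 p.2 - v‖ < δ * ‖v‖ := by
    simpa only [dist_eq_norm] using
      Metric.tendsto_nhds.mp hf' (δ * ‖v‖) (mul_pos hδ (norm_pos_iff.mpr hv))
  have hsegment : ∀ᶠ i in l, ∀ ξ ∈ segment ℝ (a i) (b i),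
      HasGradientAt (f i) (f' i ξ) ξ ∧ ‖f' i ξ - v‖ < δ * ‖v‖ :=
    Eventually.segment_of_prod_nhds ha hb (hf.and hclose)
  filter_upwards [hsegment] with i hi hcos
  obtain ⟨ξ, hξ, hmvt⟩ := exists_mem_segment_sub_eq_inner fun z hz => (hi z hz).1
  have hinner : 0 < inner ℝ (f' i ξ) (b i - a i) := by
    refine inner_pos_of_norm_sub_lt_norm_mul_cos_angle ((hi ξ hξ).2.trans ?_)
    rw [mul_comm]
    gcongr
  exact sub_pos.mp (hmvt ▸ hinner)

end Inner

theorem rateI_pos_of_swap_lt {X Y : Type*} {c : X → Y → ℝ} {Γ : Set (X × Y)} {z q : X × Y}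
    (hq : q ∈ Γ) (h : c z.1 q.2 + c q.1 z.2 < c z.1 z.2 + c q.1 q.2) : 0 < rateI c Γ z := by
  have hΓ : ∀ i : Fin 2, i ≠ 0 → ![z, q] i ∈ Γ := fun i hi => by
    rwa [Fin.eq_one_of_ne_zero i hi]
  refine lt_of_lt_of_le ?_ <| le_iSup_of_le 0 <| le_iSup_of_le ![z, q] <| le_iSup_of_le rfl <|
    le_iSup_of_le hΓ <| le_iSup_of_le (Equiv.swap 0 1) le_rfl
  rw [EReal.coe_pos, sub_pos]
  simpa [Fin.sum_univ_two] using h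

theorem stmt12_general {F Y : Type*} [NormedAddCommGroup F] [InnerProductSpace ℝ F]
    [CompleteSpace F] [TopologicalSpace Y] {c : F → Y → ℝ} {Γ : Set (F × Y)} {x : F} {y y' : Y}
    (hdiff : ∀ᶠ ξ in 𝓝 x, DifferentiableAt ℝ (fun x => c x y) ξ)
    (hgrad : ContinuousAt (gradient fun x => c x y) x)
    (hdiff' : ∀ᶠ p in 𝓝 (x, y'), DifferentiableAt ℝ (fun x => c x p.2) p.1)
    (hgrad' : ContinuousAt (fun p : F × Y => gradient (fun x => c x p.2) p.1) (x, y'))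
    {δ : ℝ} (hδ : 0 < δ)
    (hcos : ∃ᶠ p in 𝓝 (x, y'), p ∈ Γ ∧ δ < Real.cos (InnerProductGeometry.angle
      (gradient (fun x => c x y) x - gradient (fun x => c x y') x) (x - p.1))) :
    0 < rateI c Γ (x, y) := by
  have hmix : Tendsto (fun q : (F × Y) × F => (q.2, q.1.2)) (𝓝 (x, y') ×ˢ 𝓝 x) (𝓝 (x, y')) :=
    tendsto_snd.prodMk_nhds ((continuous_snd.tendsto (x, y')).comp tendsto_fst)
  let f : F × Y → F → ℝ := fun p ξ => c ξ y - c ξ p.2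
  let f' : F × Y → F → F := fun p ξ => gradient (fun x => c x y) ξ - gradient (fun x => c x p.2) ξ
  have hf : ∀ᶠ q in 𝓝 (x, y') ×ˢ 𝓝 x, HasGradientAt (f q.1) (f' q.1 q.2) q.2 := by
    filter_upwards [tendsto_snd.eventually hdiff, hmix.eventually hdiff'] with q hq hq'
    exact hasGradientAt_sub hq.hasGradientAt hq'.hasGradientAt
  have hf' : Tendsto (fun q : (F × Y) × F => f' q.1 q.2) (𝓝 (x, y') ×ˢ 𝓝 x)
      (𝓝 (f' (x, y') x)) :=
    (hgrad.tendsto.comp tendsto_snd).sub (hgrad'.tendsto.comp hmix)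
  have hlt := eventually_lt_of_lt_cos_angle hf hf' (continuous_fst.tendsto (x, y'))
    tendsto_const_nhds hδ
  obtain ⟨p, ⟨hpΓ, hpcos⟩, hp⟩ := (hcos.and_eventually hlt).exists
  have hfp : c p.1 y - c p.1 p.2 < c x y - c x p.2 := hp hpcos
  exact rateI_pos_of_swap_lt hpΓ (by linarith only [hfp])

/-- positivity of the rate function via an approximating sequence in `Γ`. -/
theorem stmt12 (c : E → Y → ℝ) (hc : Continuous fun p : E × Y => c p.1 p.2)
    (hc0 : ∀ x y, 0 ≤ c x y)
    (hdiff : ∀ y, Differentiable ℝ fun x => c x y)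
    (hgrad : Continuous fun p : E × Y => gradient (fun x => c x p.2) p.1)
    (Γ : Set (E × Y)) (hΓne : Γ.Nonempty) (hΓ : CCyclMonotone c Γ)
    (x : E) (y' : Y) (hxy' : (x, y') ∈ Γ) (y : Y)
    (hv : gradient (fun x' => c x' y) x - gradient (fun x' => c x' y') x ≠ 0)
    (s : ℕ → E × Y) (hsΓ : ∀ n, s n ∈ Γ) (hsx : ∀ n, (s n).1 ≠ x)
    (hslim : Tendsto s atTop (𝓝 (x, y')))
    (hcos : 0 < liminf (fun n => Real.cos (InnerProductGeometry.angle
        (gradient (fun x' => c x' y) x - gradient (fun x' => c x' y') x)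
        (x - (s n).1))) atTop) :
    0 < rateI c Γ (x, y) := by
  obtain ⟨δ, hδ, hδcos⟩ := exists_between hcos
  have hev := eventually_lt_of_lt_liminf hδcos
    (isBoundedUnder_of ⟨-1, fun _ => Real.neg_one_le_cos _⟩)
  exact stmt12_general (.of_forall (hdiff y)) (hgrad.comp (.prodMk_left y)).continuousAt
    (.of_forall fun p => hdiff p.2 p.1) hgrad.continuousAt hδ
    (hslim.frequently (hev.mono fun n hn => ⟨hsΓ n, hn⟩).frequently)

end Statement

end EOT
end
end

section
/- Let x be an interior point of X_0 := proj_X Γ and y ∈ Y. Suppose Γ = graph T for a transport map T: X_0 → Y which is continuous at x. If ∇_x c(x,y) − ∇_x c(x,T(x)) ≠ 0, then I(x,y) > 0. -/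
open MeasureTheory Filter Topology Set
open scoped ENNReal

noncomputable section

namespace EOT

variable {X Y : Type*}

section Statement

variable {d : ℕ} {Y : Type*} [MetricSpace Y]

local notation "E" => EuclideanSpace ℝ (Fin d)

/-!
Among the competitors defining `I(x, y)` are the two-point exchanges of `(x, y)` with
`(x', T x') ∈ Γ`, whose gain is
`g x' = [c(x', T x') - c(x, T x')] - [c(x', y) - c(x, y)]`. Joint continuity of `∇ₓ c` allows `T x'`
to be treated as constant to first order at `x`, although `T` is only continuous, so `g` is
differentiable at `x` with `∇ g x = ∇ₓ c(x, T x) - ∇ₓ c(x, y)`. If `I(x, y) ≤ 0`, then `g ≤ 0 = g x`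
near `x`, so that `x` is a local maximum of `g` and `∇ g x = 0`.
-/

section Exchange

variable {V Z : Type*}

/-- The cost saved by letting the pairs `p` and `q` exchange their second components; this is the
two-point competitor in `rateI`. -/
def exchangeGain (c : V → Z → ℝ) (p q : V × Z) : ℝ :=
  c p.1 p.2 + c q.1 q.2 - (c p.1 q.2 + c q.1 p.2)

theorem exchangeGain_same_fst (c : V → Z → ℝ) (x : V) (y z : Z) :
    exchangeGain c (x, y) (x, z) = 0 := by
  simp only [exchangeGain]
  ring

theorem exchangeGain_le_rateI (c : V → Z → ℝ) {Γ : Set (V × Z)} (p : V × Z) {q : V × Z}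
    (hq : q ∈ Γ) : (exchangeGain c p q : EReal) ≤ rateI c Γ p := by
  have hmem : ∀ i : Fin 2, i ≠ 0 → ![p, q] i ∈ Γ := by
    simpa [Fin.forall_fin_two] using hq
  have hgain : exchangeGain c p q =
      (∑ i, c (![p, q] i).1 (![p, q] i).2) -
        ∑ i, c (![p, q] i).1 (![p, q] (Equiv.swap 0 1 i)).2 := by
    simp [exchangeGain, Fin.sum_univ_two]
  rw [hgain]
  exact le_iSup_of_le 0 <| le_iSup_of_le ![p, q] <| le_iSup_of_le rfl <| le_iSup_of_le hmem <|
    le_iSup_of_le (Equiv.swap 0 1) le_rfl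

end Exchange

section Derivative

variable {V Z : Type*} [NormedAddCommGroup V] [TopologicalSpace Z]

theorem hasFDerivAt_sub_of_continuousAt_partial {𝕜 W : Type*} [NontriviallyNormedField 𝕜]
    [IsRCLikeNormedField 𝕜] [NormedSpace 𝕜 V] [NormedAddCommGroup W] [NormedSpace 𝕜 W]
    {f : V → Z → W} {f' : V → Z → V →L[𝕜] W} {T : V → Z} {x : V}
    (hf : ∀ᶠ p in 𝓝 (x, T x), HasFDerivAt (f · p.2) (f' p.1 p.2) p.1)
    (hf' : ContinuousAt (fun p : V × Z => f' p.1 p.2) (x, T x)) (hT : ContinuousAt T x) :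
    HasFDerivAt (fun z => f z (T z) - f x (T z)) (f' x (T x)) x := by
  let _ : RCLike 𝕜 := IsRCLikeNormedField.rclike 𝕜
  let _ : NormedSpace ℝ V := RestrictScalars.normedSpace ℝ 𝕜 V
  have hlim : Tendsto (fun p : V × V => (p.2, T p.1)) (𝓝 x ×ˢ 𝓝 x) (𝓝 (x, T x)) :=
    tendsto_snd.prodMk_nhds (hT.tendsto.comp tendsto_fst)
  refine .of_isLittleO <| Asymptotics.isLittleO_iff.mpr fun ε hε => ?_
  have hseg : ∀ᶠ z in 𝓝 x, ∀ v ∈ segment ℝ x z,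
      HasFDerivAt (f · (T z)) (f' v (T z)) v ∧ dist (f' v (T z)) (f' x (T x)) < ε :=
    (hlim.eventually (hf.and (Metric.tendsto_nhds.mp hf' ε hε))).segment_of_prod_nhds
      tendsto_const_nhds tendsto_id
  filter_upwards [hseg] with z hz
  simpa using Convex.norm_image_sub_le_of_norm_hasFDerivWithin_le'
    (fun v hv => (hz v hv).1.hasFDerivWithinAt)
    (fun v hv => (dist_eq_norm_sub _ _).symm.trans_le (hz v hv).2.le)
    (convex_segment x z) (left_mem_segment ℝ x z) (right_mem_segment ℝ x z)

variable [NormedSpace ℝ V] {c : V → Z → ℝ} {c' : V → Z → V →L[ℝ] ℝ} {T : V → Z} {x : V} {y : Z}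
  {L : V →L[ℝ] ℝ}

theorem hasFDerivAt_exchangeGain
    (hc : ∀ᶠ p in 𝓝 (x, T x), HasFDerivAt (c · p.2) (c' p.1 p.2) p.1)
    (hc' : ContinuousAt (fun p : V × Z => c' p.1 p.2) (x, T x)) (hT : ContinuousAt T x)
    (hy : HasFDerivAt (c · y) L x) :
    HasFDerivAt (fun z => exchangeGain c (x, y) (z, T z)) (c' x (T x) - L) x := by
  have hdiff := (hasFDerivAt_sub_of_continuousAt_partial hc hc' hT).sub (hy.sub_const (c x y))
  refine hdiff.congr_of_eventuallyEq <| .of_forall fun z => ?_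
  simp only [exchangeGain, Pi.sub_apply]
  ring

theorem stmt13_general {Γ : Set (V × Z)} (hgraph : ∀ p ∈ Γ, p.2 = T p.1)
    (hx : x ∈ interior (Prod.fst '' Γ)) (hT : ContinuousWithinAt T (Prod.fst '' Γ) x)
    (hc : ∀ᶠ p in 𝓝 (x, T x), HasFDerivAt (c · p.2) (c' p.1 p.2) p.1)
    (hc' : ContinuousAt (fun p : V × Z => c' p.1 p.2) (x, T x))
    (hy : HasFDerivAt (c · y) L x) (hne : L ≠ c' x (T x)) :
    0 < rateI c Γ (x, y) := by
  have hX₀ : Prod.fst '' Γ ∈ 𝓝 x := mem_interior_iff_mem_nhds.mp hx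
  by_contra! hI
  have hmax : IsLocalMax (fun z => exchangeGain c (x, y) (z, T z)) x := by
    filter_upwards [hX₀]
    rintro _ ⟨q, hq, rfl⟩
    have hle : exchangeGain c (x, y) q ≤ 0 := mod_cast (exchangeGain_le_rateI c (x, y) hq).trans hI
    rwa [exchangeGain_same_fst, ← hgraph q hq]
  have hderiv := hasFDerivAt_exchangeGain hc hc' (hT.continuousAt hX₀) hy
  exact hne (sub_eq_zero.mp (hmax.hasFDerivAt_eq_zero hderiv)).symm

end Derivative

/-- positivity of the rate function at interior points with continuous map. -/
theorem stmt13 (c : E → Y → ℝ) (hc : Continuous fun p : E × Y => c p.1 p.2)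
    (hc0 : ∀ x y, 0 ≤ c x y)
    (hdiff : ∀ y, Differentiable ℝ fun x => c x y)
    (hgrad : Continuous fun p : E × Y => gradient (fun x => c x p.2) p.1)
    (Γ : Set (E × Y)) (hΓne : Γ.Nonempty) (hΓ : CCyclMonotone c Γ)
    (T : E → Y) (hgraph : ∀ p ∈ Γ, p.2 = T p.1)
    (x : E) (hx : x ∈ interior (Prod.fst '' Γ)) (y : Y)
    (hT : ContinuousWithinAt T (Prod.fst '' Γ) x)
    (hv : gradient (fun x' => c x' y) x - gradient (fun x' => c x' (T x)) x ≠ 0) :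
    0 < rateI c Γ (x, y) :=
  stmt13_general (c' := fun z v => InnerProductSpace.toDual ℝ E (gradient (c · v) z)) hgraph hx hT
    (.of_forall fun p => (hdiff p.2 p.1).hasGradientAt.hasFDerivAt)
    ((InnerProductSpace.toDual ℝ E).continuous.comp hgrad).continuousAt
    (hdiff y x).hasGradientAt.hasFDerivAt
    fun h => hv (sub_eq_zero.mpr ((InnerProductSpace.toDual ℝ E).injective h))

end Statement

end EOT
end
end

section
/- Let c(x,y) = ‖x−y‖² on ℝ^d × ℝ^d, let X_0 := proj_X Γ be strictly convex (the open segment between any two distinct points of X_0 lies in the interior of X_0), and let (x,y) ∈ (X_0 × Y_0) \ Γ with x ∈ ∂X_0. Suppose Γ = graph T for a transport map T which is continuous on B_r(x) ∩ X_0 for some r > 0. Then I(x,y) > 0. -/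
open MeasureTheory Filter Topology Set
open scoped ENNReal

noncomputable section

namespace EOT

variable {X Y : Type*}

section Statement

variable {d : ℕ}

local notation "E" => EuclideanSpace ℝ (Fin d)

/-!
If `I(x, y) ≤ 0`, then swapping `(x, y)` with single points of `Γ` shows that `(x, y)` is
monotonically related to `Γ`; so is `(x', y) ∈ Γ`, hence `(z, y)` for every `z` in the segment from
`x` to `x'`. Near `x` the open segment consists of interior points of `X₀` where `T` is continuous,
and there Minty's trick forces `T z = y`. Letting `z → x` gives `T x = y`, that is, `(x, y) ∈ Γ`.
-/

section SwapInequality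

variable {c : X → Y → ℝ} {Γ : Set (X × Y)}

theorem CCyclMonotone.add_le_add_swap (hΓ : CCyclMonotone c Γ) {p q : X × Y}
    (hp : p ∈ Γ) (hq : q ∈ Γ) :
    c p.1 p.2 + c q.1 q.2 ≤ c p.1 q.2 + c q.1 p.2 := by
  simpa [Fin.sum_univ_two] using hΓ 1 ![p, q] (by simp [Fin.forall_fin_two, hp, hq])

theorem add_sub_add_swap_le_rateI (z : X × Y) {q : X × Y} (hq : q ∈ Γ) :
    ((c z.1 z.2 + c q.1 q.2 - (c z.1 q.2 + c q.1 z.2) : ℝ) : EReal) ≤ rateI c Γ z := by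
  have hmem : ∀ i : Fin 2, i ≠ 0 → ![z, q] i ∈ Γ := by simp [Fin.forall_fin_two, hq]
  refine le_iSup_of_le 0 <| le_iSup_of_le ![z, q] <| le_iSup_of_le rfl <|
    le_iSup_of_le hmem <| le_iSup_of_le (Equiv.swap 0 1) ?_
  simp [Fin.sum_univ_two]

end SwapInequality

section MonotoneRelation

variable {V : Type*} [NormedAddCommGroup V] [InnerProductSpace ℝ V]

theorem norm_sub_sq_add_le_swap_iff_inner_nonneg (a b u v : V) :
    ‖a - b‖ ^ 2 + ‖u - v‖ ^ 2 ≤ ‖a - v‖ ^ 2 + ‖u - b‖ ^ 2 ↔ 0 ≤ inner ℝ (u - a) (v - b) := by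
  have polarization : ‖a - v‖ ^ 2 + ‖u - b‖ ^ 2 - (‖a - b‖ ^ 2 + ‖u - v‖ ^ 2) =
      2 * inner ℝ (u - a) (v - b) := by
    simp only [norm_sub_sq_real, inner_sub_left, inner_sub_right]
    ring
  rw [← sub_nonneg, polarization, mul_nonneg_iff_of_pos_left two_pos]

/-- `z` is monotonically related to `Γ`, in the sense of monotone operator theory. A set `Γ` is
monotone when all its points are monotonically related to it. -/
def MonotonicallyRelated (Γ : Set (V × V)) (z : V × V) : Prop :=
  ∀ p ∈ Γ, 0 ≤ inner ℝ (p.1 - z.1) (p.2 - z.2)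

variable {Γ : Set (V × V)}

theorem CCyclMonotone.monotonicallyRelated
    (hΓ : CCyclMonotone (fun x y : V => ‖x - y‖ ^ 2) Γ) {z : V × V} (hz : z ∈ Γ) :
    MonotonicallyRelated Γ z := fun _ hp =>
  (norm_sub_sq_add_le_swap_iff_inner_nonneg _ _ _ _).1 (hΓ.add_le_add_swap hz hp)

theorem monotonicallyRelated_of_rateI_nonpos {z : V × V}
    (hz : rateI (fun x y : V => ‖x - y‖ ^ 2) Γ z ≤ 0) : MonotonicallyRelated Γ z := fun _ hp =>
  (norm_sub_sq_add_le_swap_iff_inner_nonneg _ _ _ _).1 <| sub_nonpos.1 <|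
    EReal.coe_nonpos.1 <| (add_sub_add_swap_le_rateI z hp).trans hz

theorem convex_setOf_monotonicallyRelated (Γ : Set (V × V)) (y : V) :
    Convex ℝ {a | MonotonicallyRelated Γ (a, y)} := by
  intro a ha b hb s t hs ht hst p hp
  have hcomb : p.1 - (s • a + t • b) = s • (p.1 - a) + t • (p.1 - b) := by
    rw [smul_sub, smul_sub, sub_add_sub_comm, ← add_smul, hst, one_smul]
  have hpa := mul_nonneg hs (ha p hp)
  have hpb := mul_nonneg ht (hb p hp)
  simpa only [hcomb, inner_add_left, real_inner_smul_left] using add_nonneg hpa hpb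

-- Minty's trick: test the inequality at `w = z + t • (y - T z)`, divide by `t` and let `t → 0⁺`.
theorem eq_of_eventually_inner_sub_nonneg {T : V → V} {z y : V} (hT : ContinuousAt T z)
    (h : ∀ᶠ w in 𝓝 z, 0 ≤ inner ℝ (w - z) (T w - y)) : T z = y := by
  set v := y - T z with hv
  have hray : Tendsto (fun t : ℝ => z + t • v) (𝓝[>] 0) (𝓝 z) := by
    have hcont : Continuous fun t : ℝ => z + t • v := by fun_prop
    simpa using (hcont.tendsto 0).mono_left nhdsWithin_le_nhds
  have hlim : Tendsto (fun t : ℝ => inner ℝ v (T (z + t • v) - y)) (𝓝[>] 0)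
      (𝓝 (inner ℝ v (T z - y))) :=
    tendsto_const_nhds.inner ((hT.tendsto.comp hray).sub_const y)
  have hnonneg : 0 ≤ inner ℝ v (T z - y) := by
    refine ge_of_tendsto hlim ?_
    filter_upwards [hray.eventually h, self_mem_nhdsWithin] with t hw ht
    rw [add_sub_cancel_left, real_inner_smul_left] at hw
    exact nonneg_of_mul_nonneg_right hw ht
  have hv_zero : v = 0 := by
    rwa [← neg_sub y, ← hv, inner_neg_right, neg_nonneg, real_inner_self_nonpos] at hnonneg
  exact (sub_eq_zero.1 hv_zero).symm

theorem MonotonicallyRelated.eq_of_continuousAt {T : V → V} {z y : V}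
    (h : MonotonicallyRelated Γ (z, y)) (hΓ : ∀ᶠ w in 𝓝 z, (w, T w) ∈ Γ)
    (hT : ContinuousAt T z) : T z = y :=
  eq_of_eventually_inner_sub_nonneg hT (hΓ.mono fun w hw => h (w, T w) hw)

theorem MonotonicallyRelated.eq_left_of_continuousOn {T : V → V} {s : Set V}
    {a b y : V} (ha : MonotonicallyRelated Γ (a, y)) (hb : MonotonicallyRelated Γ (b, y))
    (hΓ : ∀ w ∈ s, (w, T w) ∈ Γ) (hT : ContinuousOn T s) (has : a ∈ s)
    (hs : ∀ᶠ w in 𝓝[openSegment ℝ a b] a, s ∈ 𝓝 w) : T a = y := by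
  have hconst : ∀ᶠ w in 𝓝[openSegment ℝ a b] a, T w = y := by
    filter_upwards [hs, self_mem_nhdsWithin] with w hw hseg
    have hrel : MonotonicallyRelated Γ (w, y) :=
      (convex_setOf_monotonicallyRelated Γ y).openSegment_subset ha hb hseg
    exact hrel.eq_of_continuousAt (mem_of_superset hw hΓ) (hT.continuousAt hw)
  have hlim : Tendsto T (𝓝[openSegment ℝ a b] a) (𝓝 (T a)) :=
    (hT a has).tendsto.mono_left <|
      le_inf nhdsWithin_le_nhds (le_principal_iff.2 (hs.mono fun _ => mem_of_mem_nhds))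
  have : (𝓝[openSegment ℝ a b] a).NeBot :=
    mem_closure_iff_nhdsWithin_neBot.1
      (segment_subset_closure_openSegment (left_mem_segment ℝ a b))
  exact tendsto_nhds_unique_of_eventuallyEq hlim tendsto_const_nhds hconst

end MonotoneRelation

theorem stmt14_general {V : Type*} [NormedAddCommGroup V] [InnerProductSpace ℝ V]
    {Γ : Set (V × V)} (hΓ : CCyclMonotone (fun x y : V => ‖x - y‖ ^ 2) Γ)
    {T : V → V} (hgraph : ∀ p ∈ Γ, p.2 = T p.1) (hstrict : StrictConvex ℝ (Prod.fst '' Γ))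
    {x y : V} (hxy : (x, y) ∈ ((Prod.fst '' Γ) ×ˢ (Prod.snd '' Γ)) \ Γ)
    {r : ℝ} (hr : 0 < r) (hT : ContinuousOn T (Metric.ball x r ∩ Prod.fst '' Γ)) :
    0 < rateI (fun x y : V => ‖x - y‖ ^ 2) Γ (x, y) := by
  obtain ⟨⟨hx, ⟨x', _⟩, hx'Γ, rfl⟩, hxy_notMem⟩ := hxy
  have hmem : ∀ w ∈ Prod.fst '' Γ, (w, T w) ∈ Γ := by
    rintro _ ⟨p, hp, rfl⟩
    rwa [← hgraph p hp]
  have hne : x ≠ x' := by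
    rintro rfl
    exact hxy_notMem hx'Γ
  have hnear : ∀ᶠ w in 𝓝[openSegment ℝ x x'] x, Metric.ball x r ∩ Prod.fst '' Γ ∈ 𝓝 w := by
    filter_upwards [mem_nhdsWithin_of_mem_nhds (Metric.ball_mem_nhds x hr), self_mem_nhdsWithin]
      with w hball hseg
    exact inter_mem (Metric.isOpen_ball.mem_nhds hball) (mem_interior_iff_mem_nhds.1
      (hstrict.openSegment_subset hx (mem_image_of_mem _ hx'Γ) hne hseg))
  by_contra! hI
  have hTx := (monotonicallyRelated_of_rateI_nonpos hI).eq_left_of_continuousOn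
    (hΓ.monotonicallyRelated hx'Γ) (fun w hw => hmem w hw.2) hT
    ⟨Metric.mem_ball_self hr, hx⟩ hnear
  exact hxy_notMem (hTx ▸ hmem x hx)

/-- positivity at boundary points for quadratic cost, strictly convex `X₀`
and continuous transport map. -/
theorem stmt14 (Γ : Set (E × E)) (hΓne : Γ.Nonempty)
    (hΓ : CCyclMonotone (fun x y : E => ‖x - y‖ ^ 2) Γ)
    (T : E → E) (hgraph : ∀ p ∈ Γ, p.2 = T p.1)
    (hstrict : ∀ x₁ ∈ Prod.fst '' Γ, ∀ x₂ ∈ Prod.fst '' Γ, x₁ ≠ x₂ →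
      openSegment ℝ x₁ x₂ ⊆ interior (Prod.fst '' Γ))
    (x y : E)
    (hxy : (x, y) ∈ ((Prod.fst '' Γ) ×ˢ (Prod.snd '' Γ)) \ Γ)
    (hxb : x ∈ frontier (Prod.fst '' Γ))
    (r : ℝ) (hr : 0 < r)
    (hT : ContinuousOn T (Metric.ball x r ∩ Prod.fst '' Γ)) :
    0 < rateI (fun x y : E => ‖x - y‖ ^ 2) Γ (x, y) := by
  have hconv : StrictConvex ℝ (Prod.fst '' Γ) := fun x₁ h₁ x₂ h₂ hne s t hs ht hst =>
    hstrict x₁ h₁ x₂ h₂ hne ⟨s, t, hs, ht, hst, rfl⟩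
  exact stmt14_general hΓ hgraph hconv hxy hr hT

end Statement

end EOT
end
end

section
/- Let c(x,y) = ‖x−y‖² on ℝ^d × ℝ^d, suppose there is a Kantorovich potential ψ with I(x,y) = c(x,y) − ψ^c(y) + ψ(x) on X_0 × Y_0, let X_0 be strictly convex, and let (x,y) ∈ (X_0 × Y_0) \ Γ with x ∈ ∂X_0. If I(x̃,y) > 0 for all x̃ in the intersection of the interior of X_0 with some ball B_r(x), r > 0, then I(x,y) > 0. -/
/-!
By duality `I(x,y) = c(x,y) − ψᶜ(y) + ψ(x)` on `X₀ × Y₀`. This expression is nonnegative and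
vanishes exactly on the `c`-subdifferential `∂_c ψ`, so `I > 0` there means lying outside `∂_c ψ`.

The fibre `{x | (x,y) ∈ ∂_c ψ}` is convex: if `ψ(x) = sup_w [ζ(w) − c(x,w)]`, it is cut out by the
conditions `ζ(w) + (c(x,y) − c(x,w)) ≤ ψᶜ(y)`, one for each `w`, and for the quadratic cost
`c(x,y) − c(x,w)` is affine in `x`.

Pick `z` with `(z,y) ∈ Γ`. If `I(x,y) = 0`, the fibre contains `x` and `z`, hence the segment
between them, which by strict convexity enters the interior of `X₀` arbitrarily close to `x`.
-/

open MeasureTheory Filter Topology Set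
open scoped ENNReal

noncomputable section

namespace EOT

variable {X Y : Type*}

section Statement

variable {d : ℕ}

local notation "E" => EuclideanSpace ℝ (Fin d)

section Subdifferential

variable {c : X → Y → ℝ} {ψ : X → EReal}

theorem cConj_le (c : X → Y → ℝ) (ψ : X → EReal) (x : X) (y : Y) : cConj c ψ y ≤ ψ x + c x y :=
  iInf_le (fun x' => ψ x' + (c x' y : EReal)) x

theorem IsCConvex.cConj_ne_top (hψ : IsCConvex c ψ) (y : Y) : cConj c ψ y ≠ ⊤ := by
  obtain ⟨-, ⟨x, hx⟩, -⟩ := hψ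
  exact ne_top_of_le_ne_top (EReal.add_ne_top hx (EReal.coe_ne_top _)) (cConj_le c ψ x y)

theorem IsCConvex.mem_cSubdiff_iff (hψ : IsCConvex c ψ) {x : X} {y : Y} :
    (x, y) ∈ cSubdiff c ψ ↔ ψ x + c x y ≤ cConj c ψ y := by
  have hbot : ψ x ≠ ⊥ := hψ.1 x
  have htop : cConj c ψ y ≠ ⊤ := hψ.cConj_ne_top y
  have hle : cConj c ψ y ≤ ψ x + c x y := cConj_le c ψ x y
  change cConj c ψ y - ψ x = c x y ↔ _
  generalize cConj c ψ y = q at htop hle ⊢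
  generalize ψ x = a at hbot hle ⊢
  induction q with
  | top => exact absurd rfl htop
  | bot => induction a <;> simp_all [← EReal.coe_add]
  | coe q =>
    induction a with
    | bot => exact absurd rfl hbot
    | top => simp
    | coe a =>
      norm_cast at hle ⊢
      constructor <;> intro <;> linarith

theorem IsCConvex.notMem_cSubdiff_iff (hψ : IsCConvex c ψ) {x : X} {y : Y} :
    (x, y) ∉ cSubdiff c ψ ↔ 0 < (c x y : EReal) - cConj c ψ y + ψ x := by
  rw [hψ.mem_cSubdiff_iff, ← EReal.sub_nonpos, not_le, sub_eq_add_neg, sub_eq_add_neg,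
    add_comm (ψ x), add_right_comm]

theorem IsCConvex.mem_cSubdiff_iff_forall {ζ : Y → EReal} (hψ : IsCConvex c ψ)
    (hζ : ∀ x, ψ x = ⨆ w, ζ w - (c x w : EReal)) {x : X} {y : Y} :
    (x, y) ∈ cSubdiff c ψ ↔ ∀ w, ζ w + ((c x y - c x w : ℝ) : EReal) ≤ cConj c ψ y := by
  have add_le_iff (a : EReal) : a + c x y ≤ cConj c ψ y ↔ a ≤ cConj c ψ y - c x y :=
    (EReal.le_sub_iff_add_le (.inl (EReal.coe_ne_bot _)) (.inl (EReal.coe_ne_top _))).symm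
  have regroup (w : Y) : ζ w + ((c x y - c x w : ℝ) : EReal) = ζ w - c x w + c x y := by
    rw [EReal.coe_sub, sub_eq_add_neg, sub_eq_add_neg, add_comm (c x y : EReal), add_assoc]
  simp only [hψ.mem_cSubdiff_iff, regroup, add_le_iff, hζ x, iSup_le_iff]

end Subdifferential

section Convexity

theorem convex_setOf_add_coe_le [AddCommMonoid X] [Module ℝ X] {f : X → ℝ}
    (hf : QuasiconvexOn ℝ univ f) (a b : EReal) : Convex ℝ {x | a + (f x : EReal) ≤ b} := by
  induction a with
  | bot => simpa using convex_univ
  | top => by_cases hb : b = ⊤ <;> simp [hb, convex_univ, convex_empty]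
  | coe a =>
    induction b with
    | bot => simpa [← EReal.coe_add] using convex_empty
    | top => simpa using convex_univ
    | coe b => simpa [← EReal.coe_add, le_sub_iff_add_le'] using hf (b - a)

theorem IsCConvex.convex_setOf_mem_cSubdiff [AddCommMonoid X] [Module ℝ X] {c : X → Y → ℝ}
    {ψ : X → EReal} (hψ : IsCConvex c ψ) {y : Y}
    (hc : ∀ w, QuasiconvexOn ℝ univ fun x => c x y - c x w) :
    Convex ℝ {x | (x, y) ∈ cSubdiff c ψ} := by
  obtain ⟨ζ, hζ⟩ := hψ.2.2
  simp only [hψ.mem_cSubdiff_iff_forall hζ, ofPred_forall]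
  exact convex_iInter fun w => convex_setOf_add_coe_le (hc w) (ζ w) (cConj c ψ y)

theorem quasiconvexOn_norm_sub_sq_sub_norm_sub_sq {V : Type*} [NormedAddCommGroup V]
    [InnerProductSpace ℝ V] (y w : V) :
    QuasiconvexOn ℝ univ fun x : V => ‖x - y‖ ^ 2 - ‖x - w‖ ^ 2 := by
  have affine (x : V) :
      ‖x - y‖ ^ 2 - ‖x - w‖ ^ 2 = innerₗ V ((2 : ℝ) • (w - y)) x + (‖y‖ ^ 2 - ‖w‖ ^ 2) := by
    rw [innerₗ_apply_apply, real_inner_smul_left, inner_sub_left, norm_sub_sq_real,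
      norm_sub_sq_real, real_inner_comm w, real_inner_comm y]
    ring
  simp only [affine]
  exact (((innerₗ V ((2 : ℝ) • (w - y))).convexOn convex_univ).add_const _).quasiconvexOn

theorem openSegment_inter_nonempty_of_mem_nhds [AddCommGroup X] [Module ℝ X] [TopologicalSpace X]
    [IsTopologicalAddGroup X] [ContinuousSMul ℝ X] {x : X} {U : Set X} (hU : U ∈ 𝓝 x) (z : X) :
    (openSegment ℝ x z ∩ U).Nonempty :=
  inter_comm U _ ▸ mem_closure_iff_nhds.1
    (segment_subset_closure_openSegment (left_mem_segment ℝ x z)) U hU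

end Convexity

theorem stmt15_general [AddCommGroup X] [Module ℝ X] [TopologicalSpace X]
    [IsTopologicalAddGroup X] [ContinuousSMul ℝ X] {c : X → Y → ℝ} {Γ : Set (X × Y)}
    {ψ : X → EReal} (hψ : IsKantorovichPotential c Γ ψ) {x : X} {y : Y}
    (hc : ∀ w, QuasiconvexOn ℝ univ fun x' => c x' y - c x' w)
    (hdual : ∀ x' ∈ Prod.fst '' Γ,
      rateI c Γ (x', y) = (c x' y : EReal) - cConj c ψ y + ψ x')
    (hstrict : StrictConvex ℝ (Prod.fst '' Γ))
    (hxy : (x, y) ∈ ((Prod.fst '' Γ) ×ˢ (Prod.snd '' Γ)) \ Γ)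
    {U : Set X} (hU : U ∈ 𝓝 x)
    (hpos : ∀ x' ∈ interior (Prod.fst '' Γ) ∩ U, 0 < rateI c Γ (x', y)) :
    0 < rateI c Γ (x, y) := by
  have rateI_pos_iff : ∀ x' ∈ Prod.fst '' Γ, 0 < rateI c Γ (x', y) ↔ (x', y) ∉ cSubdiff c ψ :=
    fun x' hx' => by rw [hdual x' hx', hψ.1.notMem_cSubdiff_iff]
  obtain ⟨⟨hx, ⟨z, _⟩, hz, rfl⟩, hnot⟩ := hxy
  have hzX : z ∈ Prod.fst '' Γ := mem_image_of_mem Prod.fst hz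
  have hxz : x ≠ z := by
    rintro rfl
    exact hnot hz
  refine (rateI_pos_iff x hx).2 fun hmem => ?_
  obtain ⟨x', hx'seg, hx'U⟩ := openSegment_inter_nonempty_of_mem_nhds hU z
  have hx'int : x' ∈ interior (Prod.fst '' Γ) := hstrict.openSegment_subset hx hzX hxz hx'seg
  refine (rateI_pos_iff x' (interior_subset hx'int)).1 (hpos x' ⟨hx'int, hx'U⟩) ?_
  exact (hψ.1.convex_setOf_mem_cSubdiff hc).openSegment_subset hmem (hψ.2 hz) hx'seg

/-- positivity at boundary points for quadratic cost by continuation from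
the interior, given the dual representation of `I`. -/
theorem stmt15 (Γ : Set (E × E)) (hΓne : Γ.Nonempty)
    (hΓ : CCyclMonotone (fun x y : E => ‖x - y‖ ^ 2) Γ)
    (ψ : E → EReal)
    (hψ : IsKantorovichPotential (fun x y : E => ‖x - y‖ ^ 2) Γ ψ)
    (hdual : ∀ x ∈ Prod.fst '' Γ, ∀ y ∈ Prod.snd '' Γ,
      rateI (fun x y : E => ‖x - y‖ ^ 2) Γ (x, y) =
        ((‖x - y‖ ^ 2 : ℝ) : EReal) - cConj (fun x y : E => ‖x - y‖ ^ 2) ψ y + ψ x)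
    (hstrict : ∀ x₁ ∈ Prod.fst '' Γ, ∀ x₂ ∈ Prod.fst '' Γ, x₁ ≠ x₂ →
      openSegment ℝ x₁ x₂ ⊆ interior (Prod.fst '' Γ))
    (x y : E)
    (hxy : (x, y) ∈ ((Prod.fst '' Γ) ×ˢ (Prod.snd '' Γ)) \ Γ)
    (hxb : x ∈ frontier (Prod.fst '' Γ))
    (r : ℝ) (hr : 0 < r)
    (hpos : ∀ x' ∈ interior (Prod.fst '' Γ) ∩ Metric.ball x r,
      0 < rateI (fun x y : E => ‖x - y‖ ^ 2) Γ (x', y)) :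
    0 < rateI (fun x y : E => ‖x - y‖ ^ 2) Γ (x, y) :=
  stmt15_general hψ (quasiconvexOn_norm_sub_sq_sub_norm_sub_sq y)
    (fun x' hx' => hdual x' hx' y hxy.1.2) (strictConvex_iff_openSegment_subset.2 hstrict) hxy
    (Metric.ball_mem_nhds x hr) hpos

end Statement

end EOT
end
end

section
/- (Semidiscrete transport.) Let c(x,y) = ‖x−y‖² on ℝ^d × ℝ^d, let Γ = spt π_* for an optimal transport π_* ∈ Π(μ,ν), suppose there is a Kantorovich potential ψ with I(x,y) = c(x,y) − ψ^c(y) + ψ(x) on X_0 × Y_0, let X_0 := proj_X Γ be strictly convex, let μ be absolutely continuous with respect to Lebesgue measure, and let spt ν be at most countable with no accumulation points. Then {I = 0} ∩ (X_0 × Y_0) = Γ. -/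
open MeasureTheory Filter Topology Set
open scoped ENNReal

noncomputable section

namespace EOT

variable {X Y : Type*}

section Statement

variable {d : ℕ}

local notation "E" => EuclideanSpace ℝ (Fin d)

/-!
For fixed `y`, the points that a Kantorovich potential `ψ` for the quadratic cost allows to be
matched with `y` form a convex set, the cell of `y`, and in its interior `y` is the only possible
match, by cyclical monotonicity. By duality `I` vanishes exactly on `∂_c ψ`, so the claim is that
`x ∈ X₀` in the cell of some `y ∈ Y₀` satisfies `(x, y) ∈ Γ`. As `y` is isolated in `spt ν`, it is
an atom of `ν`, while the boundary of the cell is `μ`-null: some `(x₀, y) ∈ Γ` has `x₀` in the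
interior of the cell. The open segment from `x` to `x₀` lies in that interior and in the convex set
`X₀`, so all of it is matched with `y`; now let its points tend to `x`, using that `Γ` is closed.
-/

section CSubdiff

variable {c : X → Y → ℝ} {ψ : X → EReal} {x : X} {y : Y} {Γ : Set (X × Y)}

theorem mem_cSubdiff_iff_exists_real :
    (x, y) ∈ cSubdiff c ψ ↔ ∃ a b : ℝ, ψ x = a ∧ cConj c ψ y = b ∧ b - a = c x y := by
  change cConj c ψ y - ψ x = (c x y : EReal) ↔ _
  induction cConj c ψ y <;> induction ψ x
  case coe.coe b a => simp [← EReal.coe_sub]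
  all_goals simp [sub_eq_add_neg]

theorem coe_sub_cConj_add_eq_zero_iff :
    (c x y : EReal) - cConj c ψ y + ψ x = 0 ↔ (x, y) ∈ cSubdiff c ψ := by
  rw [mem_cSubdiff_iff_exists_real]
  induction cConj c ψ y <;> induction ψ x
  case coe.coe b a =>
    have hiff : c x y - b + a = 0 ↔ b - a = c x y := by grind
    simpa [← EReal.coe_sub, ← EReal.coe_add] using hiff
  all_goals simp [sub_eq_add_neg]

theorem cConj_le_add (c : X → Y → ℝ) (ψ : X → EReal) (x : X) (y : Y) :
    cConj c ψ y ≤ ψ x + (c x y : EReal) :=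
  iInf_le _ x

theorem mem_cSubdiff_iff_le {g : ℝ} (hg : cConj c ψ y = g) :
    (x, y) ∈ cSubdiff c ψ ↔ ψ x ≤ ((g - c x y : ℝ) : EReal) := by
  rw [mem_cSubdiff_iff_exists_real]
  constructor
  · rintro ⟨a, b, ha, hb, hab⟩
    obtain rfl : b = g := EReal.coe_injective (hb.symm.trans hg)
    rw [ha, ← hab, sub_sub_cancel]
  · intro hle
    have hge : ((g - c x y : ℝ) : EReal) ≤ ψ x := EReal.sub_le_of_le_add (hg ▸ cConj_le_add c ψ x y)
    exact ⟨g - c x y, g, hle.antisymm hge, hg, sub_sub_cancel _ _⟩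

theorem ccyclMonotone_cSubdiff (c : X → Y → ℝ) (ψ : X → EReal) :
    CCyclMonotone c (cSubdiff c ψ) := by
  intro k p hp
  choose a b ha hb hab using fun i => mem_cSubdiff_iff_exists_real.1 (hp i)
  have hle (i) : b (i + 1) ≤ a i + c (p i).1 (p (i + 1)).2 := by
    have h := cConj_le_add c ψ (p i).1 (p (i + 1)).2
    rw [ha, hb] at h
    exact_mod_cast h
  calc ∑ i, c (p i).1 (p i).2 = ∑ i, b i - ∑ i, a i := by
        simp only [← hab, Finset.sum_sub_distrib]
    _ = ∑ i, b (i + 1) - ∑ i, a i := by rw [← Equiv.sum_comp (Equiv.addRight 1) b]; rfl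
    _ ≤ ∑ i, c (p i).1 (p (i + 1)).2 := by
        rw [← Finset.sum_sub_distrib]
        exact Finset.sum_le_sum fun i _ => sub_le_iff_le_add'.2 (hle i)

theorem CCyclMonotone.add_le_add (hΓ : CCyclMonotone c Γ) {x' : X} {y' : Y}
    (h : (x, y) ∈ Γ) (h' : (x', y') ∈ Γ) : c x y + c x' y' ≤ c x y' + c x' y := by
  simpa [Fin.sum_univ_two] using hΓ 1 ![(x, y), (x', y')] (Fin.forall_fin_two.2 ⟨h, h'⟩)

theorem setOf_rateI_eq_zero_inter {A : Set X} {B : Set Y}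
    (hdual : ∀ x ∈ A, ∀ y ∈ B,
      rateI c Γ (x, y) = (c x y : EReal) - cConj c ψ y + ψ x) :
    {z | rateI c Γ z = 0} ∩ A ×ˢ B = cSubdiff c ψ ∩ A ×ˢ B := by
  ext ⟨x, y⟩
  refine and_congr_left fun ⟨hx, hy⟩ => ?_
  rw [mem_ofPred_eq, hdual x hx y hy, coe_sub_cConj_add_eq_zero_iff]

/-- The cell of `y`: the fiber over `y` of the `c`-subdifferential `∂_c ψ`, that is, the set of
points which the potential `ψ` allows to be transported to `y`. In semidiscrete transport with
quadratic cost these are the Laguerre cells. -/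
def laguerreCell (c : X → Y → ℝ) (ψ : X → EReal) (y : Y) : Set X :=
  {x | (x, y) ∈ cSubdiff c ψ}

theorem laguerreCell_eq_iInter {ζ : Y → EReal} (hζ : ∀ x, ψ x = ⨆ η, ζ η - (c x η : EReal))
    {g : ℝ} (hg : cConj c ψ y = g) :
    laguerreCell c ψ y = ⋂ η, {x | ζ η ≤ ((g + (c x η - c x y) : ℝ) : EReal)} := by
  ext x
  have hη (η : Y) : ζ η - (c x η : EReal) ≤ ((g - c x y : ℝ) : EReal) ↔
      ζ η ≤ ((g + (c x η - c x y) : ℝ) : EReal) := by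
    rw [EReal.sub_le_iff_le_add (.inl (EReal.coe_ne_bot _)) (.inl (EReal.coe_ne_top _)),
      ← EReal.coe_add]
    ring_nf
  simp only [laguerreCell, mem_ofPred_eq, mem_cSubdiff_iff_le hg, hζ, iSup_le_iff, hη, mem_iInter]

end CSubdiff

section QuadraticCost

variable {F : Type*} [NormedAddCommGroup F] [InnerProductSpace ℝ F] {ψ : F → EReal}

/-- The cost `c(x,y) = ‖x − y‖²` of quadratic optimal transport, reducible so that it unfolds to
the explicit expression. -/
abbrev quadraticCost (x y : F) : ℝ := ‖x - y‖ ^ 2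

theorem quadraticCost_sub_quadraticCost (x y η : F) :
    quadraticCost x η - quadraticCost x y = ‖η‖ ^ 2 - ‖y‖ ^ 2 - 2 * inner ℝ (η - y) x := by
  unfold quadraticCost
  rw [norm_sub_sq_real, norm_sub_sq_real, inner_sub_left, real_inner_comm x η,
    real_inner_comm x y]
  ring

theorem convex_laguerreCell (hψ : IsCConvex quadraticCost ψ) (y : F) :
    Convex ℝ (laguerreCell quadraticCost ψ y) := by
  obtain ⟨-, -, ζ, hζ⟩ := hψ
  rcases (laguerreCell quadraticCost ψ y).eq_empty_or_nonempty with hempty | ⟨x, hx⟩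
  · exact hempty ▸ convex_empty
  obtain ⟨_, g, _, hg, _⟩ := mem_cSubdiff_iff_exists_real.1 hx
  rw [laguerreCell_eq_iInter hζ hg]
  refine convex_iInter fun η => ?_
  have hlower : IsLowerSet {s : ℝ | ζ η ≤ ((g + (‖η‖ ^ 2 - ‖y‖ ^ 2 - 2 * s) : ℝ) : EReal)} :=
    fun s t hts hs => hs.trans (EReal.coe_le_coe (by linarith))
  simp only [quadraticCost_sub_quadraticCost]
  exact hlower.ordConnected.convex.is_linear_preimage (innerSL ℝ (η - y)).isLinear

theorem eq_of_mem_interior_laguerreCell {w y y' : F}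
    (hw : w ∈ interior (laguerreCell quadraticCost ψ y))
    (hwy' : (w, y') ∈ cSubdiff quadraticCost ψ) : y' = y := by
  have hcont : Tendsto (fun t : ℝ => w + t • (y' - y)) (𝓝[>] 0) (𝓝 w) := by
    have h : Continuous fun t : ℝ => w + t • (y' - y) := by fun_prop
    simpa using (h.tendsto 0).mono_left nhdsWithin_le_nhds
  obtain ⟨t, hcell, ht⟩ :=
    ((hcont.eventually (mem_interior_iff_mem_nhds.1 hw)).and self_mem_nhdsWithin).exists
  have hmono := (ccyclMonotone_cSubdiff quadraticCost ψ).add_le_add hwy' hcell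
  have hle : t * ‖y' - y‖ ^ 2 ≤ 0 := by
    have hw_diff := quadraticCost_sub_quadraticCost w y y'
    have ht_diff := quadraticCost_sub_quadraticCost (w + t • (y' - y)) y y'
    rw [inner_add_right, inner_smul_right, real_inner_self_eq_norm_sq] at ht_diff
    linarith
  have hnorm : ‖y' - y‖ ^ 2 ≤ 0 := nonpos_of_mul_nonpos_right hle ht
  simpa [sub_eq_zero] using hnorm.antisymm (sq_nonneg _)

theorem mem_of_mem_interior_laguerreCell {Γ : Set (F × F)} (hΓ : IsClosed Γ)
    (hψ : IsKantorovichPotential quadraticCost Γ ψ) (hX₀ : Convex ℝ (Prod.fst '' Γ))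
    {x x₀ y : F} (hx : x ∈ Prod.fst '' Γ) (hxy : (x, y) ∈ cSubdiff quadraticCost ψ)
    (hx₀ : x₀ ∈ interior (laguerreCell quadraticCost ψ y)) (hx₀y : (x₀, y) ∈ Γ) :
    (x, y) ∈ Γ := by
  have hseg : openSegment ℝ x x₀ ⊆ {w | (w, y) ∈ Γ} := by
    intro w hw
    have hwcell : w ∈ interior (laguerreCell quadraticCost ψ y) :=
      (convex_laguerreCell hψ.1 y).openSegment_self_interior_subset_interior hxy hx₀ hw
    obtain ⟨⟨_, y'⟩, hwy', rfl⟩ := hX₀.openSegment_subset hx (mem_image_of_mem _ hx₀y) hw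
    exact eq_of_mem_interior_laguerreCell hwcell (hψ.2 hwy') ▸ hwy'
  have hclosed : IsClosed {w | (w, y) ∈ Γ} := hΓ.preimage (by fun_prop)
  exact closure_minimal hseg hclosed
    (segment_subset_closure_openSegment (left_mem_segment ℝ x x₀))

end QuadraticCost

section Support

variable {Z W : Type*} [TopologicalSpace Z] [MeasurableSpace Z] [TopologicalSpace W]
  [MeasurableSpace W]

theorem mSupport_eq_support (π : Measure Z) : mSupport π = π.support := by
  ext z
  simp only [(nhds_basis_opens z).mem_measureSupport, and_imp]
  exact forall_congr' fun U => forall_comm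

theorem isClosed_mSupport (π : Measure Z) : IsClosed (mSupport π) :=
  mSupport_eq_support π ▸ Measure.isClosed_support

theorem ae_mem_mSupport [HereditarilyLindelofSpace Z] (π : Measure Z) :
    ∀ᵐ z ∂π, z ∈ mSupport π :=
  mSupport_eq_support π ▸ Measure.support_mem_ae

theorem mem_mSupport_map [OpensMeasurableSpace Z] [BorelSpace W] {π : Measure Z} {f : Z → W}
    (hf : Continuous f) {z : Z} (hz : z ∈ mSupport π) : f z ∈ mSupport (π.map f) := by
  intro U hU hzU
  rw [Measure.map_apply hf.measurable hU.measurableSet]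
  exact hz _ (hU.preimage hf) hzU

theorem measure_singleton_pos_of_not_accPt [HereditarilyLindelofSpace Z] {ν : Measure Z} {y : Z}
    (hy : y ∈ mSupport ν) (hacc : ¬ AccPt y (𝓟 (mSupport ν))) : 0 < ν {y} := by
  rw [accPt_iff_nhds] at hacc
  push Not at hacc
  obtain ⟨U, hU, hUy⟩ := hacc
  have hνU : 0 < ν U := (Measure.mem_support_iff_forall y).1 (mSupport_eq_support ν ▸ hy) U hU
  refine hνU.trans_le (measure_mono_ae ?_)
  filter_upwards [ae_mem_mSupport ν] with z hz hzU
  exact hUy z ⟨hzU, hz⟩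

theorem exists_mem_interior_laguerreCell {F : Type*} [NormedAddCommGroup F] [NormedSpace ℝ F]
    [FiniteDimensional ℝ F] [MeasurableSpace F] [BorelSpace F] [SecondCountableTopology W]
    {ρ : Measure F} [ρ.IsAddHaarMeasure] {π : Measure (F × W)} {c : F → W → ℝ} {ψ : F → EReal}
    {y : W} (hπ : mSupport π ⊆ cSubdiff c ψ) (hcell : Convex ℝ (laguerreCell c ψ y))
    (hfst : π.map Prod.fst ≪ ρ) (hy : π (Prod.snd ⁻¹' {y}) ≠ 0) :
    ∃ x ∈ interior (laguerreCell c ψ y), (x, y) ∈ mSupport π := by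
  have hfrontier : ∀ᵐ z ∂π, z.1 ∉ frontier (laguerreCell c ψ y) :=
    ae_of_ae_map measurable_fst.aemeasurable
      (hfst (measure_eq_zero_iff_ae_notMem.1 (hcell.addHaar_frontier ρ)))
  obtain ⟨⟨x, _⟩, rfl, hxy, hx⟩ := Measure.exists_mem_of_measure_ne_zero_of_ae hy
    (ae_restrict_of_ae ((ae_mem_mSupport π).and hfrontier))
  exact ⟨x, by_contra fun hint => hx ⟨subset_closure (hπ hxy), hint⟩, hxy⟩

end Support

theorem stmt16_general {F : Type*} [NormedAddCommGroup F] [InnerProductSpace ℝ F]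
    [FiniteDimensional ℝ F] [MeasurableSpace F] [BorelSpace F]
    {ρ : Measure F} [ρ.IsAddHaarMeasure] {μ ν : Measure F} {π : Measure (F × F)}
    (hπ : IsCoupling μ ν π) {ψ : F → EReal}
    (hψ : IsKantorovichPotential quadraticCost (mSupport π) ψ)
    (hdual : ∀ x ∈ Prod.fst '' mSupport π, ∀ y ∈ Prod.snd '' mSupport π,
      rateI quadraticCost (mSupport π) (x, y) =
        (quadraticCost x y : EReal) - cConj quadraticCost ψ y + ψ x)
    (hX₀ : Convex ℝ (Prod.fst '' mSupport π)) (hμ : μ ≪ ρ)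
    (hν : ∀ y, ¬ AccPt y (𝓟 (mSupport ν))) :
    {z | rateI quadraticCost (mSupport π) z = 0} ∩
      (Prod.fst '' mSupport π) ×ˢ (Prod.snd '' mSupport π) = mSupport π := by
  obtain ⟨-, rfl, rfl⟩ := hπ
  rw [setOf_rateI_eq_zero_inter hdual]
  refine Subset.antisymm ?_ fun z hz => ⟨hψ.2 hz, mem_image_of_mem _ hz, mem_image_of_mem _ hz⟩
  rintro ⟨x, _⟩ ⟨hxy, hx, ⟨⟨x', y⟩, hx'y, rfl⟩⟩
  have hatom : 0 < π.map Prod.snd {y} :=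
    measure_singleton_pos_of_not_accPt (mem_mSupport_map continuous_snd hx'y) (hν y)
  rw [Measure.map_apply measurable_snd (measurableSet_singleton y)] at hatom
  obtain ⟨x₀, hx₀, hx₀y⟩ :=
    exists_mem_interior_laguerreCell hψ.2 (convex_laguerreCell hψ.1 y) hμ hatom.ne'
  exact mem_of_mem_interior_laguerreCell (isClosed_mSupport π) hψ hX₀ hx hxy hx₀ hx₀y

/-- semidiscrete transport with quadratic cost: the zero set of the rate
function inside `X₀ × Y₀` is exactly `Γ`. -/
theorem stmt16 (μ ν : Measure E) [IsProbabilityMeasure μ] [IsProbabilityMeasure ν]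
    (πs : Measure (E × E)) (hπs : IsCoupling μ ν πs)
    (hopt : ∀ π', IsCoupling μ ν π' →
      transportCost (fun x y : E => ‖x - y‖ ^ 2) πs ≤
        transportCost (fun x y : E => ‖x - y‖ ^ 2) π')
    (ψ : E → EReal)
    (hψ : IsKantorovichPotential (fun x y : E => ‖x - y‖ ^ 2) (mSupport πs) ψ)
    (hdual : ∀ x ∈ Prod.fst '' mSupport πs, ∀ y ∈ Prod.snd '' mSupport πs,
      rateI (fun x y : E => ‖x - y‖ ^ 2) (mSupport πs) (x, y) =
        ((‖x - y‖ ^ 2 : ℝ) : EReal) - cConj (fun x y : E => ‖x - y‖ ^ 2) ψ y + ψ x)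
    (hstrict : ∀ x₁ ∈ Prod.fst '' mSupport πs, ∀ x₂ ∈ Prod.fst '' mSupport πs, x₁ ≠ x₂ →
      openSegment ℝ x₁ x₂ ⊆ interior (Prod.fst '' mSupport πs))
    (hμ : μ ≪ volume)
    (hν₁ : (mSupport ν).Countable) (hν₂ : ∀ x : E, ¬ AccPt x (𝓟 (mSupport ν))) :
    {z : E × E | rateI (fun x y : E => ‖x - y‖ ^ 2) (mSupport πs) z = 0} ∩
        ((Prod.fst '' mSupport πs) ×ˢ (Prod.snd '' mSupport πs)) = mSupport πs :=
  stmt16_general hπs hψ hdual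
    (strictConvex_iff_openSegment_subset.2 fun x₁ h₁ x₂ h₂ => hstrict x₁ h₁ x₂ h₂).convex hμ hν₂

end Statement

end EOT
end
end

section
/- If a coupling π ∈ Π(μ,ν) is equivalent to P = μ⊗ν and a version dπ/dP: X×Y → (0,∞) of its density satisfies the (c,ε)-cyclical invariance identity for k = 2, i.e. (dπ/dP)(x_1,y_1)(dπ/dP)(x_2,y_2) = exp(−(1/ε)[c(x_1,y_1) + c(x_2,y_2) − c(x_1,y_2) − c(x_2,y_1)]) (dπ/dP)(x_1,y_2)(dπ/dP)(x_2,y_1) for all (x_1,y_1),(x_2,y_2) ∈ X×Y, then the identity holds for every k ≥ 2: for all (x_1,y_1),…,(x_k,y_k) ∈ X×Y (with y_{k+1} := y_1), ∏_{i=1}^k (dπ/dP)(x_i,y_i) = exp(−(1/ε)[Σ_{i=1}^k c(x_i,y_i) − Σ_{i=1}^k c(x_i,y_{i+1})]) ∏_{i=1}^k (dπ/dP)(x_i,y_{i+1}). -/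
open MeasureTheory Filter Topology Set
open scoped ENNReal

noncomputable section

namespace EOT

variable {X Y : Type*}

section Statement

variable {X Y : Type*}
  [MeasurableSpace X] [TopologicalSpace X] [PolishSpace X] [BorelSpace X]
  [MeasurableSpace Y] [TopologicalSpace Y] [PolishSpace Y] [BorelSpace Y]

/-!
Put `G i j = D (x i, y j) * exp (c (x i) (y j) / ε)`. The two-point identity says that every 2×2
minor of `G` vanishes, so exchanging two columns leaves the diagonal product `∏ i, G i i`
unchanged. Transpositions generate the symmetric group, hence the same holds for any permutation of
the columns, in particular for the cyclic shift.
-/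

lemma prod_apply_swap_eq_prod_diag {ι M : Type*} [Fintype ι] [DecidableEq ι] [CommMonoid M]
    {f : ι → ι → M} {a b : ι} (h : f a b * f b a = f a a * f b b) :
    ∏ i, f i (Equiv.swap a b i) = ∏ i, f i i := by
  obtain rfl | hab := eq_or_ne a b
  · simp only [Equiv.swap_self, Equiv.refl_apply]
  have off_pair : ∏ i ∈ ({a, b} : Finset ι)ᶜ, f i (Equiv.swap a b i) =
      ∏ i ∈ ({a, b} : Finset ι)ᶜ, f i i := by
    refine Finset.prod_congr rfl fun i hi ↦ ?_
    simp only [Finset.mem_compl, Finset.mem_insert, Finset.mem_singleton, not_or] at hi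
    rw [Equiv.swap_apply_of_ne_of_ne hi.1 hi.2]
  rw [← Finset.prod_mul_prod_compl {a, b} fun i ↦ f i (Equiv.swap a b i),
    ← Finset.prod_mul_prod_compl {a, b} fun i ↦ f i i, off_pair, Finset.prod_pair hab,
    Finset.prod_pair hab, Equiv.swap_apply_left, Equiv.swap_apply_right, h]

lemma prod_apply_perm_eq_prod_diag {ι M : Type*} [Fintype ι] [CommMonoid M] {f : ι → ι → M}
    (h : ∀ i i' j j', f i j * f i' j' = f i j' * f i' j) (σ : Equiv.Perm ι) :
    ∏ i, f i (σ i) = ∏ i, f i i := by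
  classical
  induction σ using Equiv.Perm.swap_induction_on' with
  | one => rfl
  | mul_swap σ a b _ ih =>
    exact (prod_apply_swap_eq_prod_diag (f := fun i j ↦ f i (σ j)) (h _ _ _ _)).trans ih

lemma eq_exp_sub_mul_iff {p q s t : ℝ} :
    p = Real.exp (s - t) * q ↔ p * Real.exp (-s) = q * Real.exp (-t) := by
  rw [Real.exp_neg s, ← div_eq_mul_inv, div_eq_iff (Real.exp_ne_zero s), sub_eq_neg_add,
    Real.exp_add, mul_right_comm, mul_comm q]

lemma prod_mul_exp_neg_sum {ι : Type*} (s : Finset ι) (p w : ι → ℝ) :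
    (∏ i ∈ s, p i) * Real.exp (-∑ i ∈ s, w i) = ∏ i ∈ s, p i * Real.exp (-w i) := by
  rw [← Finset.sum_neg_distrib, Real.exp_sum, Finset.prod_mul_distrib]

theorem stmt18_general {α β ι : Type*} [Fintype ι] {c : α → β → ℝ} {a : ℝ} {D : α × β → ℝ}
    (h2 : ∀ x₁ x₂ y₁ y₂, D (x₁, y₁) * D (x₂, y₂) =
      Real.exp (a * (c x₁ y₁ + c x₂ y₂ - c x₁ y₂ - c x₂ y₁)) * (D (x₁, y₂) * D (x₂, y₁)))
    (x : ι → α) (y : ι → β) (σ : Equiv.Perm ι) :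
    ∏ i, D (x i, y i) =
      Real.exp (a * (∑ i, c (x i) (y i) - ∑ i, c (x i) (y (σ i)))) * ∏ i, D (x i, y (σ i)) := by
  let G (i j : ι) : ℝ := D (x i, y j) * Real.exp (-(a * c (x i) (y j)))
  have minors_vanish (i i' j j' : ι) : G i j * G i' j' = G i j' * G i' j := by
    have h := h2 (x i) (x i') (y j) (y j')
    rw [sub_sub, mul_sub, eq_exp_sub_mul_iff, mul_add, mul_add, neg_add, neg_add, Real.exp_add,
      Real.exp_add] at h
    simp only [G]
    rw [mul_mul_mul_comm, h, mul_mul_mul_comm]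
  rw [mul_sub, eq_exp_sub_mul_iff, Finset.mul_sum, Finset.mul_sum, prod_mul_exp_neg_sum,
    prod_mul_exp_neg_sum]
  exact (prod_apply_perm_eq_prod_diag minors_vanish σ).symm

/-- the cyclical invariance identity for `k = 2` implies it for all `k`. -/
theorem stmt18 (μ : Measure X) (ν : Measure Y)
    [IsProbabilityMeasure μ] [IsProbabilityMeasure ν]
    (c : X → Y → ℝ) (hc : Measurable fun p : X × Y => c p.1 p.2) (hc0 : ∀ x y, 0 ≤ c x y)
    (ε : ℝ) (hε : 0 < ε) (π : Measure (X × Y)) (hπ : IsCoupling μ ν π)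
    (D : X × Y → ℝ) (hD : Measurable D) (hDpos : ∀ z, 0 < D z)
    (hdens : π = (μ.prod ν).withDensity fun z => ENNReal.ofReal (D z))
    (h2 : ∀ x₁ x₂ y₁ y₂, D (x₁, y₁) * D (x₂, y₂) =
      Real.exp (-(1 / ε) * (c x₁ y₁ + c x₂ y₂ - c x₁ y₂ - c x₂ y₁)) *
        (D (x₁, y₂) * D (x₂, y₁))) :
    ∀ (k : ℕ) (x : Fin (k + 1) → X) (y : Fin (k + 1) → Y),
      (∏ i, D (x i, y i)) =
        Real.exp (-(1 / ε) * ((∑ i, c (x i) (y i)) - ∑ i, c (x i) (y (i + 1)))) *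
        ∏ i, D (x i, y (i + 1)) := by
  intro k x y
  exact stmt18_general h2 x y (Equiv.addRight 1)

end Statement

end EOT
end
end
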